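/- arXiv:1901.08624 — 7 statements merged into one kernel-verified Lean document; each statement's English description precedes it below -/
import Mathlib

section
/- Let N be a positive integer and let M = (m_ij) be an N×N real matrix. Then M is a permutation matrix if and only if M satisfies the doubly stochastic constraints (m_ij ≥ 0 for all i,j; every row sum equals 1; every column sum equals 1) and P(M) = 0. -/
open Finset

/-- The matrix ℓ1−ℓ2 penalty
P(M) = ∑_i [∑_j |m_ij| − (∑_j m_ij²)^{1/2}] + ∑_j [∑_i |m_ij| − (∑_i m_ij²)^{1/2}]. -/
noncomputable def pen {N : ℕ} (M : Matrix (Fin N) (Fin N) ℝ) : ℝ :=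
  (∑ i, ((∑ j, |M i j|) - Real.sqrt (∑ j, (M i j) ^ 2))) +
  (∑ j, ((∑ i, |M i j|) - Real.sqrt (∑ i, (M i j) ^ 2)))

/-- A permutation matrix: a square 0-1 matrix with exactly one 1 in each row and
each column and zeros elsewhere. -/
def IsPermMatrix {N : ℕ} (M : Matrix (Fin N) (Fin N) ℝ) : Prop :=
  ∃ σ : Equiv.Perm (Fin N), ∀ i j, M i j = if σ i = j then 1 else 0

/-- Doubly stochastic: nonnegative entries, all row sums and column sums equal 1. -/
def IsDoublyStochastic {N : ℕ} (M : Matrix (Fin N) (Fin N) ℝ) : Prop :=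
  (∀ i j, 0 ≤ M i j) ∧ (∀ i, ∑ j, M i j = 1) ∧ (∀ j, ∑ i, M i j = 1)

/-!
The ℓ1 norm of a vector dominates its ℓ2 norm, and since
`(∑ |v i|)² = ∑ (v i)² + ∑_{i ≠ j} |v i| |v j|`, the two agree exactly when at most one entry is
nonzero. The penalty is a sum of such nonnegative gaps, so `pen M = 0` says that every row and every
column of `M` has at most one nonzero entry. If moreover every row sums to `1`, then row `i` is an
indicator vector with its `1` in some column `σ i`, and the condition on columns makes `σ`
injective.
-/

section Vectors

variable {ι R : Type*}

lemma sq_sum_eq_sum_sq_add_sum_offDiag [CommSemiring R] (s : Finset ι) (f : ι → R) :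
    (∑ i ∈ s, f i) ^ 2 = ∑ i ∈ s, f i ^ 2 + ∑ p ∈ s.offDiag, f p.1 * f p.2 := by
  classical
  rw [sq, sum_mul_sum, ← sum_product', ← diag_union_offDiag, sum_union (disjoint_diag_offDiag s),
    sum_diag]
  simp only [sq]

lemma sq_sum_eq_sum_sq_iff_of_nonneg [CommSemiring R] [PartialOrder R] [IsStrictOrderedRing R]
    {s : Finset ι} {f : ι → R} (hf : ∀ i ∈ s, 0 ≤ f i) :
    (∑ i ∈ s, f i) ^ 2 = ∑ i ∈ s, f i ^ 2 ↔ (s : Set ι).Pairwise fun i j ↦ f i * f j = 0 := by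
  have hnonneg : ∀ p ∈ s.offDiag, 0 ≤ f p.1 * f p.2 := fun p hp ↦
    have ⟨h₁, h₂, _⟩ := mem_offDiag.mp hp
    mul_nonneg (hf _ h₁) (hf _ h₂)
  rw [sq_sum_eq_sum_sq_add_sum_offDiag, add_eq_left, sum_eq_zero_iff_of_nonneg hnonneg]
  exact ⟨fun h i hi j hj hij ↦ h (i, j) (mem_offDiag.mpr ⟨hi, hj, hij⟩),
    fun h p hp ↦ have ⟨h₁, h₂, hne⟩ := mem_offDiag.mp hp; h h₁ h₂ hne⟩

lemma sqrt_sum_sq_le_sum_abs (s : Finset ι) (v : ι → ℝ) :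
    √(∑ i ∈ s, v i ^ 2) ≤ ∑ i ∈ s, |v i| := by
  refine Real.sqrt_le_iff.mpr ⟨sum_nonneg fun i _ ↦ abs_nonneg (v i), ?_⟩
  simpa only [sq_abs] using sum_sq_le_sq_sum_of_nonneg (s := s) fun i _ ↦ abs_nonneg (v i)

lemma sum_abs_eq_sqrt_sum_sq_iff (s : Finset ι) (v : ι → ℝ) :
    ∑ i ∈ s, |v i| = √(∑ i ∈ s, v i ^ 2) ↔ (s : Set ι).Pairwise fun i j ↦ v i * v j = 0 := by
  have habs : ∀ i ∈ s, 0 ≤ |v i| := fun i _ ↦ abs_nonneg (v i)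
  rw [eq_comm, Real.sqrt_eq_iff_eq_sq (sum_nonneg fun i _ ↦ sq_nonneg (v i)) (sum_nonneg habs),
    eq_comm]
  simpa only [sq_abs, ← abs_mul, abs_eq_zero] using sq_sum_eq_sum_sq_iff_of_nonneg habs

lemma exists_eq_pi_single_one_of_sum_eq_one [Fintype ι] [DecidableEq ι] [NonAssocSemiring R]
    [NoZeroDivisors R] [Nontrivial R] {v : ι → R} (hv : Pairwise fun j k ↦ v j * v k = 0)
    (hsum : ∑ j, v j = 1) : ∃ j, v = Pi.single j 1 := by
  obtain ⟨j, -, hj⟩ : ∃ j ∈ univ, v j ≠ 0 := exists_ne_zero_of_sum_ne_zero (hsum ▸ one_ne_zero)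
  have hzero : ∀ k, k ≠ j → v k = 0 := fun k hk ↦
    (mul_eq_zero.mp (hv hk)).resolve_right hj
  have hone : v j = 1 := by rw [← hsum, Fintype.sum_eq_single j hzero]
  refine ⟨j, funext fun k ↦ ?_⟩
  obtain rfl | hk := eq_or_ne k j
  · rw [Pi.single_eq_same, hone]
  · rw [Pi.single_eq_of_ne hk, hzero k hk]

end Vectors

section Matrices

variable {N : ℕ} {M : Matrix (Fin N) (Fin N) ℝ}

lemma pen_eq_zero_iff :
    pen M = 0 ↔ (∀ i, Pairwise fun j k ↦ M i j * M i k = 0) ∧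
      ∀ j, Pairwise fun i k ↦ M i j * M k j = 0 := by
  have hgap (v : Fin N → ℝ) : 0 ≤ ∑ j, |v j| - √(∑ j, v j ^ 2) :=
    sub_nonneg.mpr (sqrt_sum_sq_le_sum_abs univ v)
  have hgap_eq (v : Fin N → ℝ) :
      ∑ j, |v j| - √(∑ j, v j ^ 2) = 0 ↔ Pairwise fun j k ↦ v j * v k = 0 := by
    rw [sub_eq_zero, sum_abs_eq_sqrt_sum_sq_iff, coe_univ, Set.pairwise_univ]
  rw [pen, add_eq_zero_iff_of_nonneg (sum_nonneg fun i _ ↦ hgap fun j ↦ M i j)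
      (sum_nonneg fun j _ ↦ hgap fun i ↦ M i j),
    sum_eq_zero_iff_of_nonneg fun i _ ↦ hgap fun j ↦ M i j,
    sum_eq_zero_iff_of_nonneg fun j _ ↦ hgap fun i ↦ M i j]
  simp only [mem_univ, forall_const, hgap_eq]

namespace IsPermMatrix

lemma transpose (h : IsPermMatrix M) : IsPermMatrix M.transpose := by
  obtain ⟨σ, hσ⟩ := h
  refine ⟨σ.symm, fun i j ↦ ?_⟩
  rw [Matrix.transpose_apply, hσ]
  simp only [Equiv.symm_apply_eq, eq_comm (a := i)]

lemma nonneg (h : IsPermMatrix M) (i j : Fin N) : 0 ≤ M i j := by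
  obtain ⟨σ, hσ⟩ := h
  rw [hσ]
  positivity

lemma sum_row (h : IsPermMatrix M) (i : Fin N) : ∑ j, M i j = 1 := by
  obtain ⟨σ, hσ⟩ := h
  simp [hσ]

lemma isDoublyStochastic (h : IsPermMatrix M) : IsDoublyStochastic M :=
  ⟨h.nonneg, h.sum_row, h.transpose.sum_row⟩

lemma pairwise_row_mul_eq_zero (h : IsPermMatrix M) (i : Fin N) :
    Pairwise fun j k ↦ M i j * M i k = 0 := by
  obtain ⟨σ, hσ⟩ := h
  intro j k hjk
  obtain rfl | hj := eq_or_ne (σ i) j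
  · rw [hσ i k, if_neg hjk, mul_zero]
  · rw [hσ i j, if_neg hj, zero_mul]

lemma pen_eq_zero (h : IsPermMatrix M) : pen M = 0 :=
  pen_eq_zero_iff.mpr ⟨h.pairwise_row_mul_eq_zero, h.transpose.pairwise_row_mul_eq_zero⟩

end IsPermMatrix

lemma isPermMatrix_of_sum_row_of_pen_eq_zero (hsum : ∀ i, ∑ j, M i j = 1) (hpen : pen M = 0) :
    IsPermMatrix M := by
  obtain ⟨hrow, hcol⟩ := pen_eq_zero_iff.mp hpen
  choose σ hσ using fun i ↦ exists_eq_pi_single_one_of_sum_eq_one (hrow i) (hsum i)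
  have hone : ∀ i, M i (σ i) = 1 := fun i ↦ by rw [hσ, Pi.single_eq_same]
  have hinj : Function.Injective σ := by
    intro i k hik
    by_contra hne
    have hprod : M i (σ i) * M k (σ i) = 0 := hcol (σ i) hne
    rw [hone, hik, hone, one_mul] at hprod
    exact one_ne_zero hprod
  refine ⟨Equiv.ofBijective σ (Finite.injective_iff_bijective.mp hinj), fun i j ↦ ?_⟩
  rw [hσ, Pi.single_apply, Equiv.ofBijective_apply]
  simp only [eq_comm]

end Matrices

theorem stmt0_general {N : ℕ} (M : Matrix (Fin N) (Fin N) ℝ) :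
    IsPermMatrix M ↔ (∀ i, ∑ j, M i j = 1) ∧ pen M = 0 :=
  ⟨fun h ↦ ⟨h.sum_row, h.pen_eq_zero⟩, fun h ↦ isPermMatrix_of_sum_row_of_pen_eq_zero h.1 h.2⟩

/-- M is a permutation matrix iff M is doubly stochastic and P(M) = 0. -/
theorem stmt0 {N : ℕ} (hN : 0 < N) (M : Matrix (Fin N) (Fin N) ℝ) :
    IsPermMatrix M ↔ IsDoublyStochastic M ∧ pen M = 0 := by
  refine ⟨fun h ↦ ⟨h.isDoublyStochastic, ((stmt0_general M).mp h).2⟩, ?_⟩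
  exact fun ⟨⟨_, hrow, _⟩, hpen⟩ ↦ (stmt0_general M).mpr ⟨hrow, hpen⟩
end

section
/- Fix a positive integer N. There exists a constant C > 0 depending only on N such that: for every ε with 0 < ε ≤ 1/(8N²) and every N×N real matrix M = (m_ij) with nonnegative entries satisfying P(M) ≤ ε, |Σ_j m_ij − 1| ≤ ε for every row i, and |Σ_i m_ij − 1| ≤ ε for every column j, there exists a permutation matrix P* with ‖M − P*‖_F ≤ C ε, where ‖·‖_F is the Frobenius norm. -/
open Finset

/-- Frobenius norm of a matrix. -/
noncomputable def frobNorm {N : ℕ} (M : Matrix (Fin N) (Fin N) ℝ) : ℝ :=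
  Real.sqrt (∑ i, ∑ j, (M i j) ^ 2)

/-!
If `k` is a position where `|v|` is maximal, then `‖v‖₂² ≤ |v k| ‖v‖₁`, so by AM-GM the mass of `v`
outside `k` is at most `2 (‖v‖₁ - ‖v‖₂)`. A matrix with small row penalties thus has one dominant
entry per row, and the row sums force that entry to be close to `1`. Up to the small off-dominant
mass, a column sum is the sum of those row sums whose dominant entry lies in that column; so two
rows sharing a dominant column would give a column sum of at least `2 - 4 ε`, which exceeds `1 + ε`
when `ε < 1/5`, and the dominant positions then form a permutation. For `ε ≥ 1/5` every permutation
matrix is close enough, since two standard basis vectors are at `ℓ1` distance at most `2 ≤ 10 ε`.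
-/

section Vector

variable {ι : Type*} [Fintype ι]

/-- The gap `‖v‖₁ - ‖v‖₂` of a real vector: the contribution of one row or column to `pen`. -/
noncomputable def l1SubL2 (v : ι → ℝ) : ℝ :=
  (∑ j, |v j|) - Real.sqrt (∑ j, v j ^ 2)

theorem sum_sq_le_sq_sum_abs (v : ι → ℝ) : ∑ j, v j ^ 2 ≤ (∑ j, |v j|) ^ 2 := by
  simpa only [sq_abs] using sum_sq_le_sq_sum_of_nonneg (s := univ) fun j _ => abs_nonneg (v j)

theorem l1SubL2_nonneg (v : ι → ℝ) : 0 ≤ l1SubL2 v :=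
  sub_nonneg.mpr <|
    Real.sqrt_le_iff.mpr ⟨sum_nonneg fun j _ => abs_nonneg (v j), sum_sq_le_sq_sum_abs v⟩

variable [DecidableEq ι]

theorem exists_sum_erase_abs_le_two_mul_l1SubL2 [Nonempty ι] (v : ι → ℝ) :
    ∃ k, ∑ j ∈ univ.erase k, |v j| ≤ 2 * l1SubL2 v := by
  obtain ⟨k, hk⟩ := Finite.exists_max fun j => |v j|
  have hsq : ∑ j, v j ^ 2 ≤ |v k| * ∑ j, |v j| := by
    rw [mul_sum]
    refine sum_le_sum fun j _ => ?_
    rw [← sq_abs, sq]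
    exact mul_le_mul_of_nonneg_right (hk j) (abs_nonneg _)
  have hsqrt : Real.sqrt (∑ j, v j ^ 2) ≤ (|v k| + ∑ j, |v j|) / 2 := by
    refine Real.sqrt_le_iff.mpr ⟨by positivity, ?_⟩
    linarith [four_mul_le_sq_add |v k| (∑ j, |v j|)]
  have hsplit := add_sum_erase univ (fun j => |v j|) (mem_univ k)
  refine ⟨k, ?_⟩
  unfold l1SubL2
  linarith

theorem sum_abs_sub_single_one_le (v : ι → ℝ) (k : ι) :
    ∑ j, |v j - (Pi.single k 1 : ι → ℝ) j| ≤
      |(∑ j, v j) - 1| + 2 * ∑ j ∈ univ.erase k, |v j| := by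
  have hoff : ∑ j ∈ univ.erase k, |v j - (Pi.single k 1 : ι → ℝ) j| =
      ∑ j ∈ univ.erase k, |v j| :=
    sum_congr rfl fun j hj => by rw [Pi.single_eq_of_ne (ne_of_mem_erase hj), sub_zero]
  have hdiag : |v k - 1| ≤ |(∑ j, v j) - 1| + ∑ j ∈ univ.erase k, |v j| := by
    calc |v k - 1| = |((∑ j, v j) - 1) - ∑ j ∈ univ.erase k, v j| := by
          rw [← add_sum_erase univ v (mem_univ k)]
          ring_nf
      _ ≤ |(∑ j, v j) - 1| + |∑ j ∈ univ.erase k, v j| := abs_sub _ _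
      _ ≤ |(∑ j, v j) - 1| + ∑ j ∈ univ.erase k, |v j| := by
          gcongr
          exact abs_sum_le_sum_abs _ _
  rw [← add_sum_erase _ _ (mem_univ k), hoff, Pi.single_eq_same]
  linarith

theorem sum_abs_sub_single_one_le_add_two (v : ι → ℝ) (k l : ι) :
    ∑ j, |v j - (Pi.single l 1 : ι → ℝ) j| ≤
      (∑ j, |v j - (Pi.single k 1 : ι → ℝ) j|) + 2 := by
  have hnorm (m : ι) : ∑ j, |(Pi.single m 1 : ι → ℝ) j| = 1 := by
    simp [Pi.single_apply, apply_ite abs]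
  calc ∑ j, |v j - (Pi.single l 1 : ι → ℝ) j|
      ≤ ∑ j, (|v j - (Pi.single k 1 : ι → ℝ) j| +
          (|(Pi.single k 1 : ι → ℝ) j| + |(Pi.single l 1 : ι → ℝ) j|)) :=
        sum_le_sum fun j _ => (abs_sub_le _ _ _).trans <| by gcongr; exact abs_sub _ _
    _ = (∑ j, |v j - (Pi.single k 1 : ι → ℝ) j|) + 2 := by
        rw [sum_add_distrib, sum_add_distrib, hnorm, hnorm]
        norm_num

end Vector

section DominantEntries

variable {m n : Type*} [Fintype m] [Fintype n] [DecidableEq n]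

theorem sum_fiber_rowSum_le_colSum_add (M : Matrix m n ℝ) (f : m → n) (c : n) :
    ∑ i with f i = c, ∑ j, M i j ≤ ∑ i, M i c + ∑ i, ∑ j ∈ univ.erase (f i), |M i j| := by
  rw [sum_filter, ← sum_add_distrib]
  refine sum_le_sum fun i _ => ?_
  split_ifs with h
  · rw [← add_sum_erase univ (M i) (mem_univ c), h]
    gcongr
    exact le_abs_self _
  · have hmem : c ∈ univ.erase (f i) := mem_erase.mpr ⟨Ne.symm h, mem_univ c⟩
    have hsingle := single_le_sum (f := fun j => |M i j|) (fun j _ => abs_nonneg _) hmem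
    linarith [neg_abs_le (M i c)]

theorem injective_of_sum_erase_abs_lt {M : Matrix m n ℝ} {f : m → n} {r s : ℝ} (hr : 0 ≤ r)
    (hrow : ∀ i, r ≤ ∑ j, M i j) (hcol : ∀ j, ∑ i, M i j ≤ s)
    (hoff : s + ∑ i, ∑ j ∈ univ.erase (f i), |M i j| < 2 * r) : Function.Injective f := by
  classical
  intro a b hab
  by_contra hne
  have hpair : ∑ i ∈ {a, b}, ∑ j, M i j ≤ ∑ i with f i = f a, ∑ j, M i j :=
    sum_le_sum_of_subset_of_nonneg (by simp [insert_subset_iff, hab])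
      fun i _ _ => hr.trans (hrow i)
  rw [sum_pair hne] at hpair
  linarith [sum_fiber_rowSum_le_colSum_add M f (f a), hcol (f a), hrow a, hrow b]

end DominantEntries

theorem exists_perm_sum_abs_sub_permMatrix_le {ι : Type*} [Fintype ι] [DecidableEq ι]
    {M : Matrix ι ι ℝ} {ε : ℝ} (hpen : ∑ i, l1SubL2 (M i) ≤ ε)
    (hrow : ∀ i, |(∑ j, M i j) - 1| ≤ ε) (hcol : ∀ j, ∑ i, M i j ≤ 1 + ε) :
    ∃ σ : Equiv.Perm ι, ∀ i, ∑ j, |M i j - σ.permMatrix ℝ i j| ≤ 15 * ε := by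
  have hf (i : ι) : ∃ k, ∑ j ∈ univ.erase k, |M i j| ≤ 2 * l1SubL2 (M i) :=
    have : Nonempty ι := ⟨i⟩
    exists_sum_erase_abs_le_two_mul_l1SubL2 (M i)
  choose f hf using hf
  have hoff : ∑ i, ∑ j ∈ univ.erase (f i), |M i j| ≤ 2 * ε :=
    calc ∑ i, ∑ j ∈ univ.erase (f i), |M i j| ≤ ∑ i, 2 * l1SubL2 (M i) :=
          sum_le_sum fun i _ => hf i
      _ = 2 * ∑ i, l1SubL2 (M i) := (mul_sum _ _ _).symm
      _ ≤ 2 * ε := by gcongr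
  have hdist (i : ι) : ∑ j, |M i j - (Pi.single (f i) 1 : ι → ℝ) j| ≤ 5 * ε := by
    have hgap := single_le_sum (fun i _ => l1SubL2_nonneg (M i)) (mem_univ i)
    linarith [sum_abs_sub_single_one_le (M i) (f i), hrow i, hf i]
  have hε : 0 ≤ ε := (sum_nonneg fun i _ => l1SubL2_nonneg (M i)).trans hpen
  simp only [PEquiv.toMatrix_toPEquiv_apply]
  by_cases hsmall : ε < 1 / 5
  · have hinj : Function.Injective f :=
      injective_of_sum_erase_abs_lt (r := 1 - ε) (by linarith)
        (fun i => by linarith [(abs_le.mp (hrow i)).1]) hcol (by linarith)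
    exact ⟨.ofBijective f (Finite.injective_iff_bijective.mp hinj),
      fun i => (hdist i).trans (by linarith)⟩
  · exact ⟨1, fun i => (sum_abs_sub_single_one_le_add_two (M i) (f i) _).trans
      (by linarith [hdist i])⟩

theorem isPermMatrix_permMatrix {N : ℕ} (σ : Equiv.Perm (Fin N)) :
    IsPermMatrix (σ.permMatrix ℝ) :=
  ⟨σ, fun i j => by simp [eq_comm]⟩

theorem frobNorm_le_sqrt_mul {N : ℕ} {A : Matrix (Fin N) (Fin N) ℝ} {r : ℝ} (hr : 0 ≤ r)
    (hA : ∀ i, ∑ j, |A i j| ≤ r) : frobNorm A ≤ √N * r := by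
  refine Real.sqrt_le_iff.mpr ⟨by positivity, ?_⟩
  calc ∑ i, ∑ j, A i j ^ 2 ≤ ∑ _i : Fin N, r ^ 2 :=
        sum_le_sum fun i _ => (sum_sq_le_sq_sum_abs (A i)).trans <| by gcongr; exact hA i
    _ = (√N * r) ^ 2 := by
        rw [mul_pow, Real.sq_sqrt N.cast_nonneg, sum_const, card_univ, Fintype.card_fin,
          nsmul_eq_mul]

theorem sum_l1SubL2_row_le_pen {N : ℕ} (M : Matrix (Fin N) (Fin N) ℝ) :
    ∑ i, l1SubL2 (M i) ≤ pen M :=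
  le_add_of_nonneg_right <| sum_nonneg fun j _ => l1SubL2_nonneg fun i => M i j

theorem stmt2_general {N : ℕ} {M : Matrix (Fin N) (Fin N) ℝ} {ε : ℝ}
    (hpen : ∑ i, l1SubL2 (M i) ≤ ε) (hrow : ∀ i, |(∑ j, M i j) - 1| ≤ ε)
    (hcol : ∀ j, ∑ i, M i j ≤ 1 + ε) :
    ∃ Pstar : Matrix (Fin N) (Fin N) ℝ,
      IsPermMatrix Pstar ∧ frobNorm (M - Pstar) ≤ 15 * √N * ε := by
  obtain ⟨σ, hσ⟩ := exists_perm_sum_abs_sub_permMatrix_le hpen hrow hcol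
  have hε : 0 ≤ ε := (sum_nonneg fun i _ => l1SubL2_nonneg (M i)).trans hpen
  refine ⟨σ.permMatrix ℝ, isPermMatrix_permMatrix σ, ?_⟩
  calc frobNorm (M - σ.permMatrix ℝ) ≤ √N * (15 * ε) := frobNorm_le_sqrt_mul (by positivity) hσ
    _ = 15 * √N * ε := by ring

/-- there is C > 0 depending only on N such that any entrywise nonnegative
matrix with P(M) ≤ ε and row/column sums within ε of 1 (0 < ε ≤ 1/(8N²)) is within
Frobenius distance Cε of some permutation matrix. -/
theorem stmt2 {N : ℕ} (hN : 0 < N) :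
    ∃ C > (0 : ℝ), ∀ ε : ℝ, 0 < ε → ε ≤ 1 / (8 * (N : ℝ) ^ 2) →
      ∀ M : Matrix (Fin N) (Fin N) ℝ,
        (∀ i j, 0 ≤ M i j) →
        pen M ≤ ε →
        (∀ i, |(∑ j, M i j) - 1| ≤ ε) →
        (∀ j, |(∑ i, M i j) - 1| ≤ ε) →
        ∃ Pstar : Matrix (Fin N) (Fin N) ℝ,
          IsPermMatrix Pstar ∧ frobNorm (M - Pstar) ≤ C * ε :=
  ⟨15 * √N, by positivity, fun _ _ _ M _ hpen hrow hcol =>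
    stmt2_general ((sum_l1SubL2_row_le_pen M).trans hpen) hrow fun j =>
      sub_le_iff_le_add'.mp (le_of_abs_le (hcol j))⟩
end

section
/- Let N ≥ 1 and let v = (v_1, …, v_N) be a vector in ℝ^N with nonnegative entries. Suppose 0 < ε ≤ 1/2, Σ_{k=1}^N v_k − (Σ_{k=1}^N v_k²)^{1/2} ≤ ε, and |Σ_{k=1}^N v_k − 1| ≤ ε. Then there exists an index j* such that v_j ≤ 3Nε for all j ≠ j* and |v_{j*} − 1| ≤ 4N²ε; that is, v is within O(ε) of a unit coordinate vector. -/
open Finset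

/-
Let `S` be the sum, `r` the Euclidean norm and `M` the largest entry of a nonnegative vector.
Bounding one factor of every square by `M` gives `r ^ 2 ≤ M * S`, so `r ≤ (M + S) / 2` by AM-GM,
that is `S - M ≤ 2 * (S - r)`: the total mass off the largest entry is at most twice the gap
`S - r`, independently of the dimension.
-/

section

variable {ι : Type*} {s : Finset ι}

theorem sum_sq_le_mul_sum {R : Type*} [Semiring R] [PartialOrder R] [IsOrderedRing R]
    {f : ι → R} {b : R} (hf : ∀ i ∈ s, 0 ≤ f i) (hb : ∀ i ∈ s, f i ≤ b) :
    ∑ i ∈ s, f i ^ 2 ≤ b * ∑ i ∈ s, f i := by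
  rw [mul_sum]
  refine sum_le_sum fun i hi => ?_
  rw [sq]
  exact mul_le_mul_of_nonneg_right (hb i hi) (hf i hi)

variable {f : ι → ℝ}

theorem sqrt_sum_sq_le_half_add {b : ℝ} (hb₀ : 0 ≤ b) (hf : ∀ i ∈ s, 0 ≤ f i)
    (hb : ∀ i ∈ s, f i ≤ b) :
    √(∑ i ∈ s, f i ^ 2) ≤ (b + ∑ i ∈ s, f i) / 2 := by
  have hS : 0 ≤ ∑ i ∈ s, f i := sum_nonneg hf
  refine Real.sqrt_le_iff.mpr ⟨by positivity, ?_⟩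
  calc ∑ i ∈ s, f i ^ 2 ≤ b * ∑ i ∈ s, f i := sum_sq_le_mul_sum hf hb
    _ ≤ ((b + ∑ i ∈ s, f i) / 2) ^ 2 := by
      linarith [four_mul_le_sq_add b (∑ i ∈ s, f i)]

theorem sum_erase_le_two_mul_sum_sub_sqrt_sum_sq [DecidableEq ι] {m : ι} (hm : m ∈ s)
    (hf : ∀ i ∈ s, 0 ≤ f i) (hmax : ∀ i ∈ s, f i ≤ f m) :
    ∑ i ∈ s.erase m, f i ≤ 2 * (∑ i ∈ s, f i - √(∑ i ∈ s, f i ^ 2)) := by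
  have hnorm := sqrt_sum_sq_le_half_add (hf m hm) hf hmax
  have hsplit := add_sum_erase s f hm
  linarith

end

theorem stmt4_general {ι : Type*} [Fintype ι] [Nonempty ι] {v : ι → ℝ} (hv : ∀ k, 0 ≤ v k)
    {ε δ : ℝ} (hgap : ∑ k, v k - √(∑ k, v k ^ 2) ≤ ε) (hsum : |∑ k, v k - 1| ≤ δ) :
    ∃ m, (∀ j, j ≠ m → v j ≤ 2 * ε) ∧ |v m - 1| ≤ 2 * ε + δ := by
  classical
  obtain ⟨m, hmax⟩ := Finite.exists_max v
  have htail : ∑ k ∈ univ.erase m, v k ≤ 2 * ε :=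
    (sum_erase_le_two_mul_sum_sub_sqrt_sum_sq (mem_univ m) (fun k _ => hv k)
      fun k _ => hmax k).trans (by gcongr)
  refine ⟨m, fun j hj => ?_, ?_⟩
  · exact (single_le_sum (fun k _ => hv k) (mem_erase.mpr ⟨hj, mem_univ j⟩)).trans htail
  · calc |v m - 1| = |(∑ k, v k - 1) - ∑ k ∈ univ.erase m, v k| := by
          rw [← add_sum_erase univ v (mem_univ m)]
          ring_nf
      _ ≤ |∑ k, v k - 1| + |∑ k ∈ univ.erase m, v k| := abs_sub _ _
      _ ≤ δ + 2 * ε := by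
          rw [abs_of_nonneg (sum_nonneg fun k _ => hv k)]
          exact add_le_add hsum htail
      _ = 2 * ε + δ := add_comm _ _

/-- a nonnegative vector with ∑ v_k − ‖v‖₂ ≤ ε and |∑ v_k − 1| ≤ ε
(0 < ε ≤ 1/2) is within O(ε) of a unit coordinate vector: there is j* with
v_j ≤ 3Nε for all j ≠ j* and |v_{j*} − 1| ≤ 4N²ε. -/
theorem stmt4 {N : ℕ} (hN : 1 ≤ N) (v : Fin N → ℝ) (hv : ∀ k, 0 ≤ v k)
    (ε : ℝ) (hε0 : 0 < ε) (hε : ε ≤ 1 / 2)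
    (h1 : (∑ k, v k) - Real.sqrt (∑ k, (v k) ^ 2) ≤ ε)
    (h2 : |(∑ k, v k) - 1| ≤ ε) :
    ∃ jstar : Fin N, (∀ j, j ≠ jstar → v j ≤ 3 * N * ε) ∧
      |v jstar - 1| ≤ 4 * (N : ℝ) ^ 2 * ε := by
  have : Nonempty (Fin N) := Fin.pos_iff_nonempty.mp hN
  have hN' : (1 : ℝ) ≤ N := mod_cast hN
  have hNsq : (1 : ℝ) ≤ (N : ℝ) ^ 2 := one_le_pow₀ hN'
  obtain ⟨m, hoff, hpeak⟩ := stmt4_general hv h1 h2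
  exact ⟨m, fun j hj => (hoff j hj).trans (by nlinarith), hpeak.trans (by nlinarith)⟩
end

section
/- For λ ∈ [1,2], the function F(q) := 6q² − 8q + 2 − 4λ·√(q² + (1−q)²) attains its minimum over the interval [0,1] at q = 1; that is, F(1) ≤ F(q) for all q ∈ [0,1]. -/
/-! Write `s = √(q² + (1 - q)²)`. When `λ = 1`, the relation `s² = q² + (1 - q)²` makes the excess
of the objective over its value at `q = 1` a sum of squares. On `[0, 1]` we have `s ≤ 1`, so
increasing `λ` only enlarges that excess. -/

/-- The Euclidean norm of a row (or column) of `Q(q) = [[q, 1 - q], [1 - q, q]]`. -/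
noncomputable def rowNorm (q : ℝ) : ℝ :=
  √(q ^ 2 + (1 - q) ^ 2)

/-- The penalized graph-matching objective `‖A Q(q) - Q(q) B‖_F² + λ P(Q(q))` along the segment of
doubly stochastic matrices `Q(q)`, `q ∈ [0, 1]`, for `A = [[1, 2], [3, 1]]` and
`B = [[0, 2], [3, 1]]`. Here `P` sums the `ℓ¹` norm minus the `ℓ²` norm over both rows and both
columns. As all four `ℓ¹` norms are `1`, the constant `4λ + 1` has been subtracted. -/
noncomputable def matchingObjective (lam q : ℝ) : ℝ :=
  6 * q ^ 2 - 8 * q + 2 - 4 * lam * rowNorm q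

theorem rowNorm_sq (q : ℝ) : rowNorm q ^ 2 = q ^ 2 + (1 - q) ^ 2 :=
  Real.sq_sqrt (by positivity)

theorem rowNorm_one : rowNorm 1 = 1 := by
  norm_num [rowNorm]

theorem rowNorm_le_one {q : ℝ} (hq : q ∈ Set.Icc (0 : ℝ) 1) : rowNorm q ≤ 1 :=
  Real.sqrt_le_one.2 <|
    calc
      q ^ 2 + (1 - q) ^ 2 ≤ (q + (1 - q)) ^ 2 :=
        pow_add_pow_le hq.1 (sub_nonneg.2 hq.2) two_ne_zero
      _ = 1 := by ring

theorem matchingObjective_sub_matchingObjective_one (lam q : ℝ) :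
    matchingObjective lam q - matchingObjective lam 1 =
      2 * ((rowNorm q - 1) ^ 2 + (q - 1) ^ 2) + 4 * (lam - 1) * (1 - rowNorm q) := by
  simp only [matchingObjective, rowNorm_one]
  linear_combination -2 * rowNorm_sq q

theorem stmt11_general {lam : ℝ} (hlam : 1 ≤ lam) :
    IsMinOn (matchingObjective lam) (Set.Icc 0 1) 1 := by
  refine isMinOn_iff.2 fun q hq => sub_nonneg.1 ?_
  have penalty_nonneg : 0 ≤ (lam - 1) * (1 - rowNorm q) :=
    mul_nonneg (sub_nonneg.2 hlam) (sub_nonneg.2 (rowNorm_le_one hq))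
  rw [matchingObjective_sub_matchingObjective_one, mul_assoc 4]
  positivity

/-- for λ ∈ [1,2], F(q) = 6q² − 8q + 2 − 4λ√(q² + (1−q)²) attains its
minimum over [0,1] at q = 1. -/
theorem stmt11 (lam : ℝ) (hlam : lam ∈ Set.Icc (1 : ℝ) 2) :
    ∀ q ∈ Set.Icc (0 : ℝ) 1,
      6 * (1 : ℝ) ^ 2 - 8 * 1 + 2 - 4 * lam * Real.sqrt ((1 : ℝ) ^ 2 + (1 - 1) ^ 2) ≤
        6 * q ^ 2 - 8 * q + 2 - 4 * lam * Real.sqrt (q ^ 2 + (1 - q) ^ 2) :=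
  isMinOn_iff.1 (stmt11_general hlam.1)
end

section
/- For 0 ≤ λ < √2, the function F(q) := 4[q² + (1−q)²] − 4λ·√(q² + (1−q)²) attains its unique minimum over [0,1] at q = 1/2; that is, F(1/2) < F(q) for all q ∈ [0,1] with q ≠ 1/2. -/
/-! Put `r = √(q² + (1 - q)²)`, the Euclidean norm of `(q, 1 - q)`, so that `F(q) = 4 (r² - λ r)`.
The quadratic `r² - λ r` increases strictly for `r ≥ λ / 2`, and `r` has its unique minimum at
`q = 1 / 2`, with value `√2 / 2 ≥ λ / 2`. -/

theorem strictMonoOn_sq_sub_mul {K : Type*} [Field K] [LinearOrder K] [IsStrictOrderedRing K]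
    (c : K) : StrictMonoOn (fun r ↦ r ^ 2 - c * r) (Set.Ici (c / 2)) := by
  intro a (ha : c / 2 ≤ a) b _ hab
  have hprod : 0 < (b - a) * (a + b - c) := mul_pos (sub_pos.mpr hab) (by linarith)
  have hfactor : b ^ 2 - c * b - (a ^ 2 - c * a) = (b - a) * (a + b - c) := by ring
  exact sub_pos.mp (hfactor ▸ hprod)

theorem sub_mul_sqrt_lt_sub_mul_sqrt {c s t : ℝ} (hs : 0 ≤ s) (hc : c / 2 ≤ √s) (hst : s < t) :
    s - c * √s < t - c * √t := by
  have hsqrt : √s < √t := Real.sqrt_lt_sqrt hs hst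
  simpa only [Real.sq_sqrt hs, Real.sq_sqrt (hs.trans hst.le)] using
    strictMonoOn_sq_sub_mul c hc (hc.trans hsqrt.le) hsqrt

theorem half_lt_sq_add_one_sub_sq {K : Type*} [Field K] [LinearOrder K] [IsStrictOrderedRing K]
    {q : K} (hq : q ≠ 1 / 2) : 1 / 2 < q ^ 2 + (1 - q) ^ 2 := by
  have hpos : 0 < (q - 1 / 2) ^ 2 := sq_pos_of_ne_zero (sub_ne_zero.mpr hq)
  calc
    1 / 2 < 1 / 2 + 2 * (q - 1 / 2) ^ 2 := by linarith
    _ = q ^ 2 + (1 - q) ^ 2 := by ring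

theorem stmt15_general {lam q : ℝ} (hlam : lam ≤ √2) (hq : q ≠ 1 / 2) :
    4 * ((1 / 2 : ℝ) ^ 2 + (1 - 1 / 2) ^ 2) - 4 * lam * √((1 / 2 : ℝ) ^ 2 + (1 - 1 / 2) ^ 2) <
      4 * (q ^ 2 + (1 - q) ^ 2) - 4 * lam * √(q ^ 2 + (1 - q) ^ 2) := by
  have hcenter : (1 / 2 : ℝ) ^ 2 + (1 - 1 / 2) ^ 2 = 1 / 2 := by norm_num
  have hthreshold : lam / 2 ≤ √(1 / 2) := calc
    lam / 2 ≤ √2 / 2 := by gcongr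
    _ = √(1 / 2) := by rw [Real.sqrt_div_self', Real.sqrt_div zero_le_one, Real.sqrt_one]
  have hlt := sub_mul_sqrt_lt_sub_mul_sqrt one_half_pos.le hthreshold
    (half_lt_sq_add_one_sub_sq hq)
  rw [hcenter]
  linarith

/-- for 0 ≤ λ < √2, F(q) = 4[q² + (1−q)²] − 4λ√(q² + (1−q)²) attains
its unique minimum over [0,1] at q = 1/2. -/
theorem stmt15 (lam : ℝ) (hlam0 : 0 ≤ lam) (hlam : lam < Real.sqrt 2) :
    ∀ q ∈ Set.Icc (0 : ℝ) 1, q ≠ 1 / 2 →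
      4 * ((1 / 2 : ℝ) ^ 2 + (1 - 1 / 2) ^ 2) -
          4 * lam * Real.sqrt ((1 / 2 : ℝ) ^ 2 + (1 - 1 / 2) ^ 2) <
        4 * (q ^ 2 + (1 - q) ^ 2) - 4 * lam * Real.sqrt (q ^ 2 + (1 - q) ^ 2) :=
  fun _ _ hq ↦ stmt15_general hlam.le hq
end

section
/- Let q, r, s, t be nonnegative real numbers with qt ≥ rs, q + r > 0, s + t > 0, q ≥ r, and t ≥ s. Define I(q,r,s,t) := ∫_{[−1,1]²} max(q·x₁ + r·x₂, 0)·max(s·x₁ + t·x₂, 0) dx₁ dx₂. Then I(q,r,s,t) = (1/3)(qs + rt) + (1/4)(qt + rs) + (1/24)(r²/q² + s²/t²)(3qt − rs). (Note that the hypotheses force q > 0 and t > 0, so the formula is well defined.) -/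
open MeasureTheory

/-!
On the sup-norm ball `[-1, 1]²`, a function that is positively homogeneous of degree `d` is
determined by its values on the four sides: cutting the square into the four cones over its sides
and integrating along rays gives `∫ f = (d + 2)⁻¹ ∮ f`. The integrand `max u 0 * max v 0`, with
`u = q x + r y` and `v = s x + t y`, is homogeneous of degree `2`. Since `|r| ≤ q` and `|s| ≤ t`, it
vanishes on the sides `x = -1` and `y = -1`, while on each of the other two sides only one of the
two positive parts matters, so that two one-dimensional integrals remain.
-/

section Homogeneous

open Set

variable {E : Type*} [NormedAddCommGroup E] [NormedSpace ℝ E]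

theorem setIntegral_Icc_prod_Icc_eq_intervalIntegral {f : ℝ → ℝ → E} {a b c d : ℝ}
    (hab : a ≤ b) (hcd : c ≤ d) (hf : IntegrableOn f.uncurry (Icc a b ×ˢ Icc c d)) :
    ∫ p in Icc a b ×ˢ Icc c d, f p.1 p.2 = ∫ x in a..b, ∫ y in c..d, f x y := by
  simp only [intervalIntegral.integral_of_le hab, intervalIntegral.integral_of_le hcd,
    ← integral_Icc_eq_integral_Ioc]
  exact setIntegral_prod f.uncurry hf

theorem intervalIntegral_intervalIntegral_swap_triangle {f : ℝ → ℝ → E} {a b : ℝ} (hab : a ≤ b)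
    (hf : IntegrableOn f.uncurry (Ioc a b ×ˢ Ioc a b)) :
    ∫ x in a..b, ∫ y in x..b, f x y = ∫ y in a..b, ∫ x in a..y, f x y := by
  let g : ℝ → ℝ → E := fun x y ↦ {p : ℝ × ℝ | p.1 < p.2}.indicator f.uncurry (x, y)
  have hg : IntegrableOn g.uncurry (uIoc a b ×ˢ uIoc a b) := by
    rw [uIoc_of_le hab]
    exact Integrable.indicator hf (measurableSet_lt measurable_fst measurable_snd)
  have section_fst (x : ℝ) (hx : x ∈ Ioo a b) : ∫ y in a..b, g x y = ∫ y in x..b, f x y := by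
    have : Ioc a b ∩ Ioi x = Ioc x b := by rw [Ioc_inter_Ioi, sup_eq_right.mpr hx.1.le]
    rw [intervalIntegral.integral_of_le hab, intervalIntegral.integral_of_le hx.2.le, ← this,
      ← setIntegral_indicator measurableSet_Ioi]
    rfl
  have section_snd (y : ℝ) (hy : y ∈ Ioo a b) : ∫ x in a..b, g x y = ∫ x in a..y, f x y := by
    have : Ioc a b ∩ Iio y = Ioo a y := by
      ext x
      simp only [mem_inter_iff, mem_Ioc, mem_Iio, mem_Ioo]
      exact ⟨fun h ↦ ⟨h.1.1, h.2⟩, fun h ↦ ⟨⟨h.1, (h.2.trans hy.2).le⟩, h.2⟩⟩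
    rw [intervalIntegral.integral_of_le hab, intervalIntegral.integral_of_le hy.1.le,
      integral_Ioc_eq_integral_Ioo (y := y), ← this, ← setIntegral_indicator measurableSet_Iio]
    rfl
  rw [← intervalIntegral.integral_congr_Ioo_of_le hab section_fst,
    ← intervalIntegral.integral_congr_Ioo_of_le hab section_snd]
  exact intervalIntegral_intervalIntegral_swap hg

theorem intervalIntegral_neg_self_eq_integral_add_comp_neg {f : ℝ → E} {a : ℝ}
    (hf : IntervalIntegrable f volume (-a) a) :
    ∫ x in (-a)..a, f x = ∫ x in (0 : ℝ)..a, (f x + f (-x)) := by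
  have h0 : (0 : ℝ) ∈ uIcc (-a) a := by
    rcases le_total 0 a with h | h
    · exact mem_uIcc_of_le (neg_nonpos.mpr h) h
    · exact mem_uIcc_of_ge h (neg_nonneg.mpr h)
  have hleft : IntervalIntegrable f volume (-a) 0 :=
    hf.mono_set (uIcc_subset_uIcc_left h0)
  have hright : IntervalIntegrable f volume 0 a :=
    hf.mono_set (uIcc_subset_uIcc_right h0)
  have hneg : IntervalIntegrable (fun x ↦ f (-x)) volume 0 a := by
    simpa using ((IntervalIntegrable.iff_comp_neg (by simp)).mp hleft).symm
  rw [intervalIntegral.integral_add hright hneg, intervalIntegral.integral_comp_neg, neg_zero,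
    add_comm, intervalIntegral.integral_add_adjacent_intervals hleft hright]

variable {f : ℝ → ℝ → E}

theorem intervalIntegral_square_eq_integral_triangle (hf : Continuous f.uncurry) {a : ℝ}
    (ha : 0 ≤ a) :
    ∫ x in (0 : ℝ)..a, ∫ y in (0 : ℝ)..a, f x y =
      ∫ x in (0 : ℝ)..a, ∫ y in (0 : ℝ)..x, (f x y + f y x) := by
  have hint : IntegrableOn f.uncurry (Ioc 0 a ×ˢ Ioc 0 a) :=
    (hf.continuousOn.integrableOn_compact (isCompact_Icc.prod isCompact_Icc)).mono_set
      (prod_mono Ioc_subset_Icc_self Ioc_subset_Icc_self)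
  have hlower : Continuous fun x ↦ ∫ y in (0 : ℝ)..x, f x y := by fun_prop
  have hsquare : Continuous fun x ↦ ∫ y in (0 : ℝ)..a, f x y := by fun_prop
  have hsplit (x : ℝ) :
      ∫ y in (0 : ℝ)..a, f x y = (∫ y in (0 : ℝ)..x, f x y) + ∫ y in x..a, f x y :=
    (intervalIntegral.integral_add_adjacent_intervals
      (Continuous.intervalIntegrable (by fun_prop) ..)
      (Continuous.intervalIntegrable (by fun_prop) ..)).symm
  have hupper : Continuous fun x ↦ ∫ y in x..a, f x y := by
    simpa only [hsplit, Pi.sub_def, add_sub_cancel_left] using hsquare.sub hlower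
  have hlower' : Continuous fun x ↦ ∫ y in (0 : ℝ)..x, f y x := by fun_prop
  calc ∫ x in (0 : ℝ)..a, ∫ y in (0 : ℝ)..a, f x y
      = (∫ x in (0 : ℝ)..a, ∫ y in (0 : ℝ)..x, f x y) +
          ∫ x in (0 : ℝ)..a, ∫ y in x..a, f x y := by
        simp only [hsplit]
        exact intervalIntegral.integral_add (hlower.intervalIntegrable ..)
          (hupper.intervalIntegrable ..)
    _ = (∫ x in (0 : ℝ)..a, ∫ y in (0 : ℝ)..x, f x y) +
          ∫ x in (0 : ℝ)..a, ∫ y in (0 : ℝ)..x, f y x := by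
        rw [intervalIntegral_intervalIntegral_swap_triangle ha hint]
    _ = ∫ x in (0 : ℝ)..a, ∫ y in (0 : ℝ)..x, (f x y + f y x) := by
        rw [← intervalIntegral.integral_add (hlower.intervalIntegrable ..)
          (hlower'.intervalIntegrable ..)]
        refine intervalIntegral.integral_congr fun x _ ↦ ?_
        exact (intervalIntegral.integral_add (Continuous.intervalIntegrable (by fun_prop) ..)
          (Continuous.intervalIntegrable (by fun_prop) ..)).symm

theorem intervalIntegral_symmetric_square_eq_integral_quadrant (hf : Continuous f.uncurry)
    (a : ℝ) :
    ∫ x in (-a)..a, ∫ y in (-a)..a, f x y =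
      ∫ x in (0 : ℝ)..a, ∫ y in (0 : ℝ)..a,
        (f x y + f x (-y) + (f (-x) y + f (-x) (-y))) := by
  have hinner (x : ℝ) : ∫ y in (-a)..a, f x y = ∫ y in (0 : ℝ)..a, (f x y + f x (-y)) :=
    intervalIntegral_neg_self_eq_integral_add_comp_neg
      (Continuous.intervalIntegrable (by fun_prop) ..)
  simp only [hinner]
  rw [intervalIntegral_neg_self_eq_integral_add_comp_neg
    (Continuous.intervalIntegrable (by fun_prop) ..)]
  refine intervalIntegral.integral_congr fun x _ ↦ ?_
  exact (intervalIntegral.integral_add (Continuous.intervalIntegrable (by fun_prop) ..)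
    (Continuous.intervalIntegrable (by fun_prop) ..)).symm

theorem intervalIntegral_triangle_of_homogeneous [CompleteSpace E] {d : ℕ}
    (hom : ∀ c x y : ℝ, 0 < c → f (c * x) (c * y) = c ^ d • f x y) :
    ∫ x in (0 : ℝ)..1, ∫ y in (0 : ℝ)..x, f x y =
      ((d : ℝ) + 2)⁻¹ • ∫ z in (0 : ℝ)..1, f 1 z := by
  have hray (x : ℝ) (hx : x ∈ Ioo (0 : ℝ) 1) :
      ∫ y in (0 : ℝ)..x, f x y = x ^ (d + 1) • ∫ z in (0 : ℝ)..1, f 1 z := by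
    calc ∫ y in (0 : ℝ)..x, f x y
        = x • ∫ z in (0 : ℝ)..1, f (x * 1) (x * z) := by
          simp only [mul_one, intervalIntegral.smul_integral_comp_mul_left, mul_zero]
      _ = x • ∫ z in (0 : ℝ)..1, x ^ d • f 1 z := by simp only [hom x _ _ hx.1]
      _ = x ^ (d + 1) • ∫ z in (0 : ℝ)..1, f 1 z := by
          rw [intervalIntegral.integral_smul, smul_smul, pow_succ']
  rw [intervalIntegral.integral_congr_Ioo_of_le zero_le_one hray,
    intervalIntegral.integral_smul_const, integral_pow]
  congr 1
  push_cast
  ring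

theorem setIntegral_square_of_homogeneous [CompleteSpace E] (hf : Continuous f.uncurry) {d : ℕ}
    (hom : ∀ c x y : ℝ, 0 < c → f (c * x) (c * y) = c ^ d • f x y) :
    ∫ p in Icc (-1 : ℝ) 1 ×ˢ Icc (-1 : ℝ) 1, f p.1 p.2 =
      ((d : ℝ) + 2)⁻¹ • ∫ z in (-1 : ℝ)..1, (f 1 z + f (-1) z + f z 1 + f z (-1)) := by
  let g : ℝ → ℝ → E := fun x y ↦ f x y + f x (-y) + (f (-x) y + f (-x) (-y))
  have hg : Continuous g.uncurry := by fun_prop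
  have hg_hom (c x y : ℝ) (hc : 0 < c) :
      g (c * x) (c * y) + g (c * y) (c * x) = c ^ d • (g x y + g y x) := by
    simp only [g, ← mul_neg, hom _ _ _ hc, smul_add]
  rw [setIntegral_Icc_prod_Icc_eq_intervalIntegral (by norm_num) (by norm_num)
      (hf.continuousOn.integrableOn_compact (isCompact_Icc.prod isCompact_Icc)),
    intervalIntegral_symmetric_square_eq_integral_quadrant hf,
    intervalIntegral_square_eq_integral_triangle hg zero_le_one,
    intervalIntegral_triangle_of_homogeneous hg_hom,
    intervalIntegral_neg_self_eq_integral_add_comp_neg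
      (Continuous.intervalIntegrable (by fun_prop) ..)]
  congr 2 with z
  simp only [g]
  abel

end Homogeneous

theorem integral_mul_max_affine_zero {g : ℝ → ℝ} (hg : Continuous g) {s t a b : ℝ} (ht : 0 < t)
    (ha : a ≤ -s / t) (hb : -s / t ≤ b) :
    ∫ y in a..b, g y * max (s + t * y) 0 = ∫ y in (-s / t)..b, g y * (s + t * y) := by
  have hneg : ∫ y in a..(-s / t), g y * max (s + t * y) 0 = 0 := by
    refine intervalIntegral.integral_zero_ae (.of_forall fun y hy ↦ ?_)
    rw [Set.uIoc_of_le ha, Set.mem_Ioc, le_div_iff₀ ht] at hy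
    rw [max_eq_right (by linarith [hy.2]), mul_zero]
  have hpos : ∫ y in (-s / t)..b, g y * max (s + t * y) 0 =
      ∫ y in (-s / t)..b, g y * (s + t * y) := by
    refine intervalIntegral.integral_congr fun y hy ↦ ?_
    rw [Set.uIcc_of_le hb, Set.mem_Icc, div_le_iff₀ ht] at hy
    simp only [max_eq_left (show 0 ≤ s + t * y by linarith [hy.1])]
  rw [← intervalIntegral.integral_add_adjacent_intervals
    (Continuous.intervalIntegrable (by fun_prop) a (-s / t))
    (Continuous.intervalIntegrable (by fun_prop) (-s / t) b), hneg, hpos, zero_add]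

theorem integral_affine_mul_affine (q r s t a b : ℝ) :
    ∫ y in a..b, (q + r * y) * (s + t * y) =
      q * s * (b - a) + (q * t + r * s) * (b ^ 2 - a ^ 2) / 2 + r * t * (b ^ 3 - a ^ 3) / 3 := by
  have hderiv (y : ℝ) : HasDerivAt
      (fun y ↦ q * s * y + (q * t + r * s) * y ^ 2 / 2 + r * t * y ^ 3 / 3)
      ((q + r * y) * (s + t * y)) y := by
    refine ((((hasDerivAt_id y).const_mul (q * s)).add
      (((hasDerivAt_pow 2 y).const_mul (q * t + r * s)).div_const 2)).add
      (((hasDerivAt_pow 3 y).const_mul (r * t)).div_const 3)).congr_deriv ?_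
    norm_num
    ring
  rw [intervalIntegral.integral_eq_sub_of_hasDerivAt (fun y _ ↦ hderiv y)
    (Continuous.intervalIntegrable (by fun_prop) ..)]
  ring

theorem abs_mul_le_of_abs_le_of_abs_le_one {q r y : ℝ} (hr : |r| ≤ q) (hy : |y| ≤ 1) :
    |r * y| ≤ q :=
  (abs_mul r y).trans_le ((mul_le_of_le_one_right (abs_nonneg r) hy).trans hr)

theorem integral_max_affine_mul_max_affine {q r s t : ℝ} (ht : 0 < t) (hr : |r| ≤ q)
    (hs : |s| ≤ t) :
    ∫ y in (-1 : ℝ)..1, max (q + r * y) 0 * max (s + t * y) 0 =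
      q * s + (q * t + r * s) / 2 + r * t / 3 +
        s ^ 2 / t ^ 2 * (3 * (q * t) - r * s) / 6 := by
  have hmax : ∀ y ∈ Set.uIcc (-1 : ℝ) 1,
      max (q + r * y) 0 * max (s + t * y) 0 = (q + r * y) * max (s + t * y) 0 := by
    intro y hy
    rw [Set.uIcc_of_le (by norm_num), Set.mem_Icc, ← abs_le] at hy
    have hry := abs_le.mp (abs_mul_le_of_abs_le_of_abs_le_one hr hy)
    rw [max_eq_left (by linarith [hry.1])]
  rw [intervalIntegral.integral_congr hmax, integral_mul_max_affine_zero (by fun_prop) ht,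
    integral_affine_mul_affine]
  · field_simp
    ring
  · rw [le_div_iff₀ ht]
    linarith [le_abs_self s]
  · rw [div_le_iff₀ ht]
    linarith [neg_abs_le s]

/-- The product of the rectified linear forms `q x + r y` and `s x + t y`, curried so that it can be
integrated one coordinate at a time. -/
def reluMulRelu (q r s t x y : ℝ) : ℝ :=
  max (q * x + r * y) 0 * max (s * x + t * y) 0

theorem continuous_uncurry_reluMulRelu (q r s t : ℝ) :
    Continuous (reluMulRelu q r s t).uncurry := by
  unfold reluMulRelu
  fun_prop

theorem reluMulRelu_mul_mul (q r s t : ℝ) {c : ℝ} (x y : ℝ) (hc : 0 ≤ c) :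
    reluMulRelu q r s t (c * x) (c * y) = c ^ 2 * reluMulRelu q r s t x y := by
  have hmax (a b : ℝ) : max (a * (c * x) + b * (c * y)) 0 = c * max (a * x + b * y) 0 := by
    rw [mul_max_of_nonneg _ _ hc]
    ring_nf
  simp only [reluMulRelu, hmax]
  ring

theorem reluMulRelu_add_sides {q r s t z : ℝ} (hr : |r| ≤ q) (hs : |s| ≤ t) (hz : |z| ≤ 1) :
    reluMulRelu q r s t 1 z + reluMulRelu q r s t (-1) z +
        reluMulRelu q r s t z 1 + reluMulRelu q r s t z (-1) =
      max (q + r * z) 0 * max (s + t * z) 0 + max (t + s * z) 0 * max (r + q * z) 0 := by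
  have hrz := abs_le.mp (abs_mul_le_of_abs_le_of_abs_le_one hr hz)
  have hsz := abs_le.mp (abs_mul_le_of_abs_le_of_abs_le_one hs hz)
  have hleft : max (-q + r * z) 0 = 0 := max_eq_right (by linarith [hrz.2])
  have hbottom : max (-t + s * z) 0 = 0 := max_eq_right (by linarith [hsz.2])
  simp only [reluMulRelu, mul_one, mul_neg, hleft, add_comm (s * z), hbottom]
  ring_nf

theorem stmt17_general {q r s t : ℝ} (hq : 0 < q) (ht : 0 < t) (hr : |r| ≤ q) (hs : |s| ≤ t) :
    ∫ p in (Set.Icc (-1 : ℝ) 1) ×ˢ (Set.Icc (-1 : ℝ) 1),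
        (max (q * p.1 + r * p.2) 0) * (max (s * p.1 + t * p.2) 0) =
      (1 / 3) * (q * s + r * t) + (1 / 4) * (q * t + r * s) +
        (1 / 24) * (r ^ 2 / q ^ 2 + s ^ 2 / t ^ 2) * (3 * (q * t) - r * s) := by
  have hboundary := setIntegral_square_of_homogeneous (continuous_uncurry_reluMulRelu q r s t)
    fun _ x y hc ↦ reluMulRelu_mul_mul q r s t x y hc.le
  have hsides : ∀ z ∈ Set.uIcc (-1 : ℝ) 1, _ := fun z hz ↦
    reluMulRelu_add_sides hr hs (abs_le.mpr (Set.uIcc_of_le (by norm_num : (-1 : ℝ) ≤ 1) ▸ hz))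
  rw [intervalIntegral.integral_congr hsides,
    intervalIntegral.integral_add (Continuous.intervalIntegrable (by fun_prop) ..)
      (Continuous.intervalIntegrable (by fun_prop) ..),
    integral_max_affine_mul_max_affine ht hr hs, integral_max_affine_mul_max_affine hq hs hr,
    smul_eq_mul] at hboundary
  refine hboundary.trans ?_
  push_cast
  ring

/-- for q,r,s,t ≥ 0 with qt ≥ rs, q + r > 0, s + t > 0, q ≥ r, t ≥ s,
∫_{[−1,1]²} max(q x₁ + r x₂, 0) max(s x₁ + t x₂, 0) dx
  = (1/3)(qs + rt) + (1/4)(qt + rs) + (1/24)(r²/q² + s²/t²)(3qt − rs). -/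
theorem stmt17 (q r s t : ℝ) (hq : 0 ≤ q) (hr : 0 ≤ r) (hs : 0 ≤ s) (ht : 0 ≤ t)
    (hdet : r * s ≤ q * t) (hqr : 0 < q + r) (hst : 0 < s + t)
    (h1 : r ≤ q) (h2 : s ≤ t) :
    ∫ p in (Set.Icc (-1 : ℝ) 1) ×ˢ (Set.Icc (-1 : ℝ) 1),
        (max (q * p.1 + r * p.2) 0) * (max (s * p.1 + t * p.2) 0) =
      (1 / 3) * (q * s + r * t) + (1 / 4) * (q * t + r * s) +
        (1 / 24) * (r ^ 2 / q ^ 2 + s ^ 2 / t ^ 2) * (3 * (q * t) - r * s) :=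
  stmt17_general (by linarith) (by linarith) ((abs_of_nonneg hr).trans_le h1)
    ((abs_of_nonneg hs).trans_le h2)
end

section
/- Let q, r, s, t be nonnegative real numbers with qt ≥ rs, q + r > 0, s + t > 0, and t < s. Define I(q,r,s,t) := ∫_{[−1,1]²} max(q·x₁ + r·x₂, 0)·max(s·x₁ + t·x₂, 0) dx₁ dx₂. Then I(q,r,s,t) = (2/3)(qs + rt) + r²(3qt − rs)/(24q²) + t²(qt − 3rs)/(24s²). (Note that the hypotheses force q > 0 and s > 0, so the formula is well defined.) -/
open MeasureTheory

/-! Let `u` and `v` be the two linear forms. Averaging the integrand over `p ↦ -p` replaces `u⁺ v⁺`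
by `(u⁺ v⁺ + u⁻ v⁻) / 2 = (u v)⁺ / 2 = (u v + (u v)⁻) / 2`. The integral of `u v` is a combination
of second moments of the rectangle. The function `(u v)⁻` is supported on the double sector between
the lines `u = 0` and `v = 0`; on the slice at height `y` it is a parabolic arch between the two
roots `-r y / q` and `-t y / s`, both of which lie inside the rectangle, so that the slice
contributes a constant times `(|q t - r s| |y|) ^ 3`. -/

section PosPart

variable {R : Type*} [Ring R] [LinearOrder R] [IsOrderedRing R]

lemma posPart_mul_eq_add (a b : R) : (a * b)⁺ = a⁺ * b⁺ + a⁻ * b⁻ := by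
  rcases le_total 0 a with ha | ha <;> rcases le_total 0 b with hb | hb
  · simp [posPart_of_nonneg, negPart_of_nonneg, mul_nonneg, ha, hb]
  · simp [posPart_of_nonneg, posPart_of_nonpos, negPart_of_nonneg,
      mul_nonpos_of_nonneg_of_nonpos, ha, hb]
  · simp [posPart_of_nonneg, posPart_of_nonpos, negPart_of_nonneg,
      mul_nonpos_of_nonpos_of_nonneg, ha, hb]
  · simp [posPart_of_nonneg, posPart_of_nonpos, negPart_of_nonpos,
      mul_nonneg_of_nonpos_of_nonpos, ha, hb]

lemma negPart_mul_of_nonneg_left {a : R} (ha : 0 ≤ a) (b : R) : (a * b)⁻ = a * b⁻ := by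
  rcases le_total 0 b with hb | hb
  · simp only [negPart_of_nonneg, mul_nonneg ha hb, hb, mul_zero]
  · simp only [negPart_of_nonpos, mul_nonpos_of_nonneg_of_nonpos ha hb, hb, mul_neg]

end PosPart

lemma neg_div_mem_Icc_of_abs_le {K : Type*} [Field K] [LinearOrder K] [IsStrictOrderedRing K]
    {k c a : K} (hk : 0 < k) (hc : |c| ≤ k * a) : -c / k ∈ Set.Icc (-a) a := by
  rwa [Set.mem_Icc, ← abs_le, abs_div, abs_neg, abs_of_pos hk, div_le_iff₀' hk]

lemma integral_posPart {X : Type*} [MeasurableSpace X] {μ : Measure X} {f : X → ℝ}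
    (hf : Integrable f μ) : ∫ x, (f x)⁺ ∂μ = ∫ x, f x ∂μ + ∫ x, (f x)⁻ ∂μ := by
  have hf_neg : Integrable (fun x ↦ (f x)⁻) μ := hf.neg_part
  rw [← integral_add hf hf_neg]
  congr with x
  exact sub_eq_iff_eq_add.1 (posPart_sub_negPart (f x))

section Symmetrization

variable {G : Type*} [AddGroup G] [MeasurableSpace G] [MeasurableNeg G]
  {μ : Measure G} [μ.IsNegInvariant] {S : Set G}

lemma setIntegral_comp_neg {E : Type*} [NormedAddCommGroup E] [NormedSpace ℝ E]
    (hS : -S = S) (f : G → E) : ∫ x in S, f (-x) ∂μ = ∫ x in S, f x ∂μ := by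
  have h := (Measure.measurePreserving_neg μ).setIntegral_preimage_emb
    (MeasurableEquiv.neg G).measurableEmbedding f S
  rwa [Set.neg_preimage, hS] at h

lemma setIntegral_posPart_mul_of_odd {f g : G → ℝ} (hS : -S = S) (hf : f.Odd) (hg : g.Odd)
    (hfg : IntegrableOn (fun x ↦ (f x)⁺ * (g x)⁺) S μ) :
    ∫ x in S, (f x * g x)⁺ ∂μ = 2 * ∫ x in S, (f x)⁺ * (g x)⁺ ∂μ := by
  have reflect : (fun x ↦ (f x)⁻ * (g x)⁻) = fun x ↦ (f (-x))⁺ * (g (-x))⁺ := by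
    funext x
    rw [hf, hg, posPart_neg, posPart_neg]
  have hfg_neg : IntegrableOn (fun x ↦ (f x)⁻ * (g x)⁻) S μ := by
    rw [reflect, ← hS]
    exact hfg.comp_neg
  simp only [posPart_mul_eq_add]
  rw [integral_add hfg hfg_neg, reflect,
    setIntegral_comp_neg hS fun x ↦ (f x)⁺ * (g x)⁺, two_mul]

end Symmetrization

lemma setIntegral_prod_symm {α β E : Type*} [MeasurableSpace α] [MeasurableSpace β]
    [NormedAddCommGroup E] [NormedSpace ℝ E] {μ : Measure α} {ν : Measure β} [SFinite μ]
    [SFinite ν] {f : α × β → E} {S : Set α} {T : Set β} (hf : IntegrableOn f (S ×ˢ T) (μ.prod ν)) :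
    ∫ p in S ×ˢ T, f p ∂μ.prod ν = ∫ y in T, ∫ x in S, f (x, y) ∂μ ∂ν := by
  rw [IntegrableOn, ← Measure.prod_restrict] at hf
  rw [← Measure.prod_restrict, integral_prod_symm f hf]

lemma integral_sub_mul_sub (α β : ℝ) : ∫ x in α..β, (x - α) * (β - x) = (β - α) ^ 3 / 6 := by
  have translate : ∫ x in α..β, (x - α) * (β - x) = ∫ y in 0..β - α, ((β - α) * y - y ^ 2) := by
    rw [← sub_self α, ← intervalIntegral.integral_comp_sub_right]
    congr with x
    ring
  rw [translate, intervalIntegral.integral_sub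
    (Continuous.intervalIntegrable (by fun_prop) _ _)
    (Continuous.intervalIntegrable (by fun_prop) _ _),
    intervalIntegral.integral_const_mul, integral_id, integral_pow]
  push_cast
  ring

lemma setIntegral_negPart_sub_mul_sub {α β : ℝ} {S : Set ℝ} (hS : MeasurableSet S)
    (hαβ : Set.uIcc α β ⊆ S) :
    ∫ x in S, ((x - α) * (x - β))⁻ = |β - α| ^ 3 / 6 := by
  wlog hle : α ≤ β generalizing α β
  · simpa only [mul_comm, abs_sub_comm] using
      this (Set.uIcc_comm α β ▸ hαβ) (le_of_not_ge hle)
  rw [Set.uIcc_of_le hle] at hαβ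
  have zero_outside : ∀ x ∈ S \ Set.Icc α β, ((x - α) * (x - β))⁻ = 0 := by
    rintro x ⟨-, hx⟩
    rw [negPart_eq_zero]
    rcases lt_or_ge x α with hxα | hxα
    · exact mul_nonneg_of_nonpos_of_nonpos (by linarith) (by linarith)
    · have hxβ : β < x := lt_of_not_ge fun h ↦ hx ⟨hxα, h⟩
      exact mul_nonneg (by linarith) (by linarith)
  have eq_between : ∀ x ∈ Set.Icc α β, ((x - α) * (x - β))⁻ = (x - α) * (β - x) := by
    rintro x ⟨hαx, hxβ⟩
    rw [negPart_of_nonpos (mul_nonpos_of_nonneg_of_nonpos (by linarith) (by linarith)), ← mul_neg,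
      neg_sub]
  calc ∫ x in S, ((x - α) * (x - β))⁻
      = ∫ x in Set.Icc α β, ((x - α) * (x - β))⁻ :=
        setIntegral_eq_of_subset_of_forall_sdiff_eq_zero hS hαβ zero_outside
    _ = ∫ x in Set.Icc α β, (x - α) * (β - x) := setIntegral_congr_fun measurableSet_Icc eq_between
    _ = ∫ x in α..β, (x - α) * (β - x) := by
        rw [integral_Icc_eq_integral_Ioc, intervalIntegral.integral_of_le hle]
    _ = |β - α| ^ 3 / 6 := by
        rw [integral_sub_mul_sub, abs_of_nonneg (sub_nonneg.2 hle)]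

lemma setIntegral_negPart_affine_mul_affine {q s c d : ℝ} {S : Set ℝ} (hq : 0 < q) (hs : 0 < s)
    (hS : MeasurableSet S) (hroots : Set.uIcc (-c / q) (-d / s) ⊆ S) :
    ∫ x in S, ((q * x + c) * (s * x + d))⁻ = |q * d - s * c| ^ 3 / (6 * q ^ 2 * s ^ 2) := by
  have factor (x : ℝ) : ((q * x + c) * (s * x + d))⁻ =
      q * s * ((x - -c / q) * (x - -d / s))⁻ := by
    have product : (q * x + c) * (s * x + d) = q * s * ((x - -c / q) * (x - -d / s)) := by
      field_simp
      ring
    rw [product, negPart_mul_of_nonneg_left (mul_pos hq hs).le]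
  have root_gap : -d / s - -c / q = -(q * d - s * c) / (q * s) := by
    field_simp
    ring
  simp only [factor]
  rw [integral_const_mul, setIntegral_negPart_sub_mul_sub hS hroots, root_gap, abs_div, abs_neg,
    abs_of_pos (mul_pos hq hs)]
  field_simp

lemma setIntegral_Icc_abs_pow {b : ℝ} (hb : 0 ≤ b) (n : ℕ) :
    ∫ y in Set.Icc (-b) b, |y| ^ n = 2 * b ^ (n + 1) / (n + 1) := by
  have right_half : ∫ y in 0..b, |y| ^ n = b ^ (n + 1) / (n + 1) := by
    have h := integral_pow_abs_sub_uIoc (a := 0) (b := b) n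
    simpa only [Set.uIoc_of_le hb, ← intervalIntegral.integral_of_le hb, sub_zero,
      abs_of_nonneg hb] using h
  have left_half : ∫ y in -b..0, |y| ^ n = b ^ (n + 1) / (n + 1) := by
    have h := intervalIntegral.integral_comp_neg (a := 0) (b := b) fun y : ℝ ↦ |y| ^ n
    simpa only [abs_neg, neg_zero, right_half, eq_comm] using h
  have integrable (u v : ℝ) : IntervalIntegrable (fun y ↦ |y| ^ n) volume u v :=
    Continuous.intervalIntegrable (by fun_prop) u v
  rw [integral_Icc_eq_integral_Ioc, ← intervalIntegral.integral_of_le (by linarith),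
    ← intervalIntegral.integral_add_adjacent_intervals (integrable (-b) 0) (integrable 0 b),
    left_half, right_half]
  ring

lemma setIntegral_Icc_quadratic {a : ℝ} (ha : 0 ≤ a) (A B C : ℝ) :
    ∫ x in Set.Icc (-a) a, (A * x ^ 2 + B * x + C) = 2 / 3 * A * a ^ 3 + 2 * C * a := by
  have integrable {f : ℝ → ℝ} (hf : Continuous f) : IntervalIntegrable f volume (-a) a :=
    hf.intervalIntegrable _ _
  rw [integral_Icc_eq_integral_Ioc, ← intervalIntegral.integral_of_le (by linarith),
    intervalIntegral.integral_add (integrable (by fun_prop)) (integrable (by fun_prop)),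
    intervalIntegral.integral_add (integrable (by fun_prop)) (integrable (by fun_prop)),
    intervalIntegral.integral_const_mul, intervalIntegral.integral_const_mul,
    integral_pow, integral_id, intervalIntegral.integral_const, smul_eq_mul]
  push_cast
  ring

lemma integrableOn_Icc_prod_Icc {E : Type*} [NormedAddCommGroup E] {f : ℝ × ℝ → E}
    (hf : Continuous f) {a b c d : ℝ} : IntegrableOn f (Set.Icc a b ×ˢ Set.Icc c d) :=
  hf.continuousOn.integrableOn_compact (isCompact_Icc.prod isCompact_Icc)

section Rectangle

variable {q r s t a b : ℝ}

lemma setIntegral_rectangle_linear_mul_linear (ha : 0 ≤ a) (hb : 0 ≤ b) :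
    ∫ p in Set.Icc (-a) a ×ˢ Set.Icc (-b) b, (q * p.1 + r * p.2) * (s * p.1 + t * p.2) =
      4 / 3 * (a * b) * (q * s * a ^ 2 + r * t * b ^ 2) := by
  have inner (y : ℝ) : ∫ x in Set.Icc (-a) a, (q * x + r * y) * (s * x + t * y) =
      2 * (r * t) * a * y ^ 2 + 0 * y + 2 / 3 * (q * s) * a ^ 3 := by
    have expand (x : ℝ) : (q * x + r * y) * (s * x + t * y) =
        q * s * x ^ 2 + (q * t + r * s) * y * x + r * t * y ^ 2 := by ring
    simp only [expand]
    rw [setIntegral_Icc_quadratic ha]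
    ring
  rw [Measure.volume_eq_prod, setIntegral_prod_symm (integrableOn_Icc_prod_Icc (by fun_prop))]
  simp only [inner]
  rw [setIntegral_Icc_quadratic hb]
  ring

lemma setIntegral_rectangle_negPart_linear_mul_linear (hq : 0 < q) (hs : 0 < s) (hb : 0 ≤ b)
    (hr : |r| * b ≤ q * a) (ht : |t| * b ≤ s * a) :
    ∫ p in Set.Icc (-a) a ×ˢ Set.Icc (-b) b, ((q * p.1 + r * p.2) * (s * p.1 + t * p.2))⁻ =
      b ^ 4 * |q * t - r * s| ^ 3 / (12 * q ^ 2 * s ^ 2) := by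
  have root_mem {k c y : ℝ} (hk : 0 < k) (hc : |c| * b ≤ k * a) (hy : y ∈ Set.Icc (-b) b) :
      -(c * y) / k ∈ Set.Icc (-a) a := by
    refine neg_div_mem_Icc_of_abs_le hk ?_
    rw [abs_mul]
    exact (mul_le_mul_of_nonneg_left (abs_le.2 hy) (abs_nonneg c)).trans hc
  have inner : ∀ y ∈ Set.Icc (-b) b,
      ∫ x in Set.Icc (-a) a, ((q * x + r * y) * (s * x + t * y))⁻ =
        |q * t - r * s| ^ 3 / (6 * q ^ 2 * s ^ 2) * |y| ^ 3 := by
    intro y hy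
    rw [setIntegral_negPart_affine_mul_affine hq hs measurableSet_Icc
      (Set.uIcc_subset_Icc (root_mem hq hr hy) (root_mem hs ht hy)),
      show q * (t * y) - s * (r * y) = (q * t - r * s) * y by ring, abs_mul]
    ring
  rw [Measure.volume_eq_prod, setIntegral_prod_symm (integrableOn_Icc_prod_Icc (by fun_prop)),
    setIntegral_congr_fun measurableSet_Icc inner, integral_const_mul, setIntegral_Icc_abs_pow hb]
  push_cast
  ring

end Rectangle

theorem stmt19_general {q r s t a b : ℝ} (hq : 0 < q) (hs : 0 < s) (hb : 0 ≤ b)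
    (hr : |r| * b ≤ q * a) (ht : |t| * b ≤ s * a) :
    ∫ p in Set.Icc (-a) a ×ˢ Set.Icc (-b) b,
        (max (q * p.1 + r * p.2) 0) * (max (s * p.1 + t * p.2) 0) =
      2 / 3 * (a * b) * (q * s * a ^ 2 + r * t * b ^ 2) +
        b ^ 4 * |q * t - r * s| ^ 3 / (24 * q ^ 2 * s ^ 2) := by
  have ha : 0 ≤ a := nonneg_of_mul_nonneg_right ((by positivity : 0 ≤ |r| * b).trans hr) hq
  have odd (k c : ℝ) : (fun p : ℝ × ℝ ↦ k * p.1 + c * p.2).Odd := fun p ↦ by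
    simp only [Prod.fst_neg, Prod.snd_neg]
    ring
  have hsymm : -(Set.Icc (-a) a ×ˢ Set.Icc (-b) b) = Set.Icc (-a) a ×ˢ Set.Icc (-b) b := by
    simp
  have fold := setIntegral_posPart_mul_of_odd (μ := volume) hsymm (odd q r) (odd s t)
    (integrableOn_Icc_prod_Icc (by fun_prop))
  rw [integral_posPart (integrableOn_Icc_prod_Icc (by fun_prop)),
    setIntegral_rectangle_linear_mul_linear ha hb,
    setIntegral_rectangle_negPart_linear_mul_linear hq hs hb hr ht] at fold
  simp only [posPart_def] at fold
  linear_combination -fold / 2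

/-- for q,r,s,t ≥ 0 with qt ≥ rs, q + r > 0, s + t > 0, t < s,
∫_{[−1,1]²} max(q x₁ + r x₂, 0) max(s x₁ + t x₂, 0) dx
  = (2/3)(qs + rt) + r²(3qt − rs)/(24q²) + t²(qt − 3rs)/(24s²). -/
theorem stmt19 (q r s t : ℝ) (hq : 0 ≤ q) (hr : 0 ≤ r) (hs : 0 ≤ s) (ht : 0 ≤ t)
    (hdet : r * s ≤ q * t) (hqr : 0 < q + r) (hst : 0 < s + t) (h1 : t < s) :
    ∫ p in (Set.Icc (-1 : ℝ) 1) ×ˢ (Set.Icc (-1 : ℝ) 1),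
        (max (q * p.1 + r * p.2) 0) * (max (s * p.1 + t * p.2) 0) =
      (2 / 3) * (q * s + r * t) + r ^ 2 * (3 * (q * t) - r * s) / (24 * q ^ 2) +
        t ^ 2 * (q * t - 3 * (r * s)) / (24 * s ^ 2) := by
  have hs₀ : 0 < s := by linarith
  have hrq : r ≤ q :=
    le_of_mul_le_mul_right (hdet.trans (mul_le_mul_of_nonneg_left h1.le hq)) hs₀
  have hq₀ : 0 < q := by linarith
  rw [stmt19_general hq₀ hs₀ zero_le_one
    (by simpa [abs_of_nonneg hr] using hrq) (by simpa [abs_of_nonneg ht] using h1.le),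
    abs_of_nonneg (sub_nonneg.2 hdet)]
  -- The two fractions on the right add up to `(q t - r s) ^ 3 / (24 q ^ 2 s ^ 2)`.
  field_simp
  ring
end
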